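/- arXiv:2301.01140 — 2 statements merged into one kernel-verified Lean document; each statement's English description precedes it below -/
import Mathlib

section
/- Let M ≥ 1, N ≥ 1, R ≥ 1 and W ≥ 1 be integers. Then there exists exactly one real number p ∈ [0,1] satisfying the fixed-point equation (1 - 1/(M·(p^R(W-1)/2 + 1)))^{N-1} + p - 1 = 0. -/
/-- There exists exactly one real p ∈ [0,1] satisfying the fixed-point equation
(1 - 1/(M·(p^R(W-1)/2 + 1)))^{N-1} + p - 1 = 0. -/
theorem stmt_4 (M N R W : ℕ) (hM : 1 ≤ M) (hN : 1 ≤ N) (hR : 1 ≤ R) (hW : 1 ≤ W) :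
    ∃! p : ℝ, p ∈ Set.Icc (0 : ℝ) 1 ∧
      (1 - 1 / ((M : ℝ) * (p ^ R * ((W : ℝ) - 1) / 2 + 1))) ^ (N - 1) + p - 1 = 0 := by
  have hM' : (1 : ℝ) ≤ M := by exact_mod_cast hM
  have hW' : (0 : ℝ) ≤ (W : ℝ) - 1 := by
    have : (1 : ℝ) ≤ W := by exact_mod_cast hW
    linarith
  set c : ℝ := (W : ℝ) - 1 with hc
  have hD : ∀ p : ℝ, 0 ≤ p → 1 ≤ (M : ℝ) * (p ^ R * c / 2 + 1) := by
    intro p hp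
    have h1 : 0 ≤ p ^ R * c / 2 := by positivity
    nlinarith
  have hB : ∀ p : ℝ, 0 ≤ p → 0 ≤ 1 - 1 / ((M : ℝ) * (p ^ R * c / 2 + 1)) := by
    intro p hp
    have := (div_le_one (by linarith [hD p hp])).2 (hD p hp)
    linarith
  have hB1 : ∀ p : ℝ, 0 ≤ p → 1 - 1 / ((M : ℝ) * (p ^ R * c / 2 + 1)) ≤ 1 := by
    intro p hp
    have : 0 ≤ 1 / ((M : ℝ) * (p ^ R * c / 2 + 1)) :=
      div_nonneg zero_le_one (by linarith [hD p hp])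
    linarith
  have hmono : StrictMonoOn (fun p : ℝ =>
      (1 - 1 / ((M : ℝ) * (p ^ R * c / 2 + 1))) ^ (N - 1) + p - 1) (Set.Icc 0 1) := by
    intro p hp q hq hpq
    have h0 := hD p hp.1
    have hpw : p ^ R ≤ q ^ R := pow_le_pow_left₀ hp.1 hpq.le R
    have h1 : (M : ℝ) * (p ^ R * c / 2 + 1) ≤ (M : ℝ) * (q ^ R * c / 2 + 1) := by gcongr
    have h2 := one_div_le_one_div_of_le (by linarith) h1
    have h3 := pow_le_pow_left₀ (hB p hp.1) (sub_le_sub_left h2 1) (N - 1)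
    show _ + p - 1 < _ + q - 1
    linarith
  have hcont : ContinuousOn (fun p : ℝ =>
      (1 - 1 / ((M : ℝ) * (p ^ R * c / 2 + 1))) ^ (N - 1) + p - 1) (Set.Icc 0 1) := by
    have : ContinuousOn (fun p : ℝ => 1 / ((M : ℝ) * (p ^ R * c / 2 + 1))) (Set.Icc 0 1) := by
      apply ContinuousOn.div (by fun_prop) (by fun_prop)
      intro p hp
      linarith [hD p hp.1]
    fun_prop
  have hiv := intermediate_value_Icc (zero_le_one (α := ℝ)) hcont
  obtain ⟨p, hp, hfp⟩ := hiv (show (0 : ℝ) ∈ _ from by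
    constructor
    · have := pow_le_one₀ (n := N - 1) (hB 0 le_rfl) (hB1 0 le_rfl)
      show _ + (0 : ℝ) - 1 ≤ 0
      linarith
    · have := pow_nonneg (hB 1 zero_le_one) (N - 1)
      show 0 ≤ _ + (1 : ℝ) - 1
      linarith)
  refine ⟨p, ⟨hp, hfp⟩, ?_⟩
  rintro q ⟨hq, hfq⟩
  exact hmono.injOn hq hp (hfq.trans hfp.symm)
end

section
/- Let p be a real number with 0 ≤ p < 1, let α be a real number, and let R ≥ 1 and W ≥ 1 be integers. Then ∑_{i=0}^{R-1} (1-p)·p^i·(i + α) + ∑_{i=R}^{∞} (1-p)·p^i·((i-R+1)·(W+1)/2 + R - 1 + α) = (p^R·(W-1)/2 + p)/(1-p) + α. In particular, the average BF training latency equals D = T_BI·((p^R(W-1)/2 + p)/(1-p) + α). -/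
theorem fin_part (p α : ℝ) (hp1 : p < 1) (R : ℕ) :
    (∑ i ∈ Finset.range R, (1 - p) * p ^ i * ((i : ℝ) + α)) =
      (p - R * p ^ R + (R - 1) * p ^ (R + 1)) / (1 - p) + α * (1 - p ^ R) := by
  have h : (1 - p) ≠ 0 := by linarith
  induction R with
  | zero => simp
  | succ n ih =>
    rw [Finset.sum_range_succ, ih]
    push_cast
    field_simp
    ring

theorem tail_part (p a b : ℝ) (hp0 : 0 ≤ p) (hp1 : p < 1) (R : ℕ) :
    HasSum (fun j : ℕ => (1 - p) * p ^ (R + j) * (((j : ℝ) + 1) * a + b))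
      (p ^ R * (a / (1 - p) + b)) := by
  have h : (1 - p) ≠ 0 := by linarith
  have hn : ‖p‖ < 1 := by rwa [Real.norm_eq_abs, abs_of_nonneg hp0]
  have h1 := hasSum_coe_mul_geometric_of_norm_lt_one hn
  have h2 := hasSum_geometric_of_norm_lt_one hn
  have h3 := (h1.mul_left ((1 - p) * p ^ R * a)).add (h2.mul_left ((1 - p) * p ^ R * (a + b)))
  convert h3 using 1
  · rfl
  · funext j
    rw [pow_add]
    ring
  · field_simp
    ring

/-- ∑_{i=0}^{R-1} (1-p)·p^i·(i + α) + ∑_{i=R}^{∞} (1-p)·p^i·((i-R+1)·(W+1)/2 + R - 1 + α)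
= (p^R·(W-1)/2 + p)/(1-p) + α, and consequently the average BF training latency equals
D = T_BI·((p^R(W-1)/2 + p)/(1-p) + α). -/
theorem stmt_7 (p α : ℝ) (hp0 : 0 ≤ p) (hp1 : p < 1) (R W : ℕ) (hR : 1 ≤ R) (hW : 1 ≤ W) :
    ((∑ i ∈ Finset.range R, (1 - p) * p ^ i * ((i : ℝ) + α)) +
      ∑' j : ℕ, (1 - p) * p ^ (R + j) * (((j : ℝ) + 1) * ((W : ℝ) + 1) / 2 + (R : ℝ) - 1 + α) =
      (p ^ R * ((W : ℝ) - 1) / 2 + p) / (1 - p) + α) ∧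
    (∀ TBI : ℝ, TBI * ((∑ i ∈ Finset.range R, (1 - p) * p ^ i * ((i : ℝ) + α)) +
        ∑' j : ℕ, (1 - p) * p ^ (R + j) *
          (((j : ℝ) + 1) * ((W : ℝ) + 1) / 2 + (R : ℝ) - 1 + α)) =
      TBI * ((p ^ R * ((W : ℝ) - 1) / 2 + p) / (1 - p) + α)) := by
  have h : (1 - p) ≠ 0 := by linarith
  have key : (∑ i ∈ Finset.range R, (1 - p) * p ^ i * ((i : ℝ) + α)) +
      ∑' j : ℕ, (1 - p) * p ^ (R + j) * (((j : ℝ) + 1) * ((W : ℝ) + 1) / 2 + (R : ℝ) - 1 + α) =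
      (p ^ R * ((W : ℝ) - 1) / 2 + p) / (1 - p) + α := by
    have ht := (tail_part p (((W : ℝ) + 1) / 2) ((R : ℝ) - 1 + α) hp0 hp1 R).tsum_eq
    have he : ∀ j : ℕ, (1 - p) * p ^ (R + j) *
        (((j : ℝ) + 1) * ((W : ℝ) + 1) / 2 + (R : ℝ) - 1 + α) =
        (1 - p) * p ^ (R + j) * (((j : ℝ) + 1) * (((W : ℝ) + 1) / 2) + ((R : ℝ) - 1 + α)) := by
      intro j
      ring
    rw [tsum_congr he, ht, fin_part p α hp1 R]
    field_simp
    ring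
  exact ⟨key, fun TBI => by rw [key]⟩
end
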